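/- arXiv:math/9502238 — 3 statements merged into one kernel-verified Lean document; each statement's English description precedes it below -/
import Mathlib

section
/- For all integers v, k, t with 1 ≤ t ≤ k ≤ v, the covering number satisfies the Schönheim inequality C(v,k,t) ≥ ⌈(v/k) · C(v−1, k−1, t−1)⌉. -/
/-- A `(v,k,t)` covering design: a family of `k`-element subsets (blocks) of a
`v`-element set such that every `t`-element subset is contained in at least one block. -/
def IsCoverDesign (v k t : ℕ) (B : Finset (Finset (Fin v))) : Prop :=
  (∀ b ∈ B, b.card = k) ∧
  ∀ s : Finset (Fin v), s.card = t → ∃ b ∈ B, s ⊆ b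

/-- `coverNumber v k t` is `C(v,k,t)`, the minimum number of blocks in a
`(v,k,t)` covering design. -/
noncomputable def coverNumber (v k t : ℕ) : ℕ :=
  sInf {n : ℕ | ∃ B : Finset (Finset (Fin v)), IsCoverDesign v k t B ∧ B.card = n}

/-!
Every point of a covering lies in at least `C(v−1,k−1,t−1)` blocks, because those blocks, with the
point removed, form a `(v−1,k−1,t−1)` covering of the remaining points. Counting the incident pairs
(point, block) of a minimum covering in two ways then gives
`v · C(v−1,k−1,t−1) ≤ k · C(v,k,t)`.
-/

section

open Finset

variable {v k t : ℕ}

theorem isCoverDesign_powersetCard (htk : t ≤ k) (hkv : k ≤ v) :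
    IsCoverDesign v k t (powersetCard k univ) := by
  refine ⟨fun b hb => (mem_powersetCard.1 hb).2, fun s hs => ?_⟩
  obtain ⟨b, hsb, hbu, hb⟩ := exists_subsuperset_card_eq (subset_univ s) (hs.trans_le htk)
    (hkv.trans_eq (card_fin v).symm)
  exact ⟨b, mem_powersetCard.2 ⟨hbu, hb⟩, hsb⟩

theorem exists_isCoverDesign_card_eq_coverNumber (htk : t ≤ k) (hkv : k ≤ v) :
    ∃ B, IsCoverDesign v k t B ∧ #B = coverNumber v k t :=
  Nat.sInf_mem (s := {n | ∃ B, IsCoverDesign v k t B ∧ #B = n})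
    ⟨_, _, isCoverDesign_powersetCard htk hkv, rfl⟩

/-- The block `b` with the point `x` deleted, where the points other than `x` are renumbered by
`Fin v` through `x.succAbove`. -/
def deletePoint (x : Fin (v + 1)) (b : Finset (Fin (v + 1))) : Finset (Fin v) :=
  {i | x.succAbove i ∈ b}

theorem map_succAboveEmb_deletePoint (x : Fin (v + 1)) (b : Finset (Fin (v + 1))) :
    (deletePoint x b).map x.succAboveEmb = b.erase x := by
  ext y
  cases y using x.succAboveCases <;> simp [deletePoint, Fin.succAbove_ne]

theorem card_deletePoint {x : Fin (v + 1)} {b : Finset (Fin (v + 1))} (hx : x ∈ b) :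
    #(deletePoint x b) = #b - 1 := by
  rw [← card_map x.succAboveEmb, map_succAboveEmb_deletePoint, card_erase_of_mem hx]

theorem subset_deletePoint_iff {x : Fin (v + 1)} {b : Finset (Fin (v + 1))} {s : Finset (Fin v)} :
    s ⊆ deletePoint x b ↔ s.map x.succAboveEmb ⊆ b := by
  simp [deletePoint, subset_iff]

/-- The derived family of `B` at the point `x`: the blocks of `B` through `x`, with `x` deleted. -/
def derivedFamily (x : Fin (v + 1)) (B : Finset (Finset (Fin (v + 1)))) :
    Finset (Finset (Fin v)) :=
  {b ∈ B | x ∈ b}.image (deletePoint x)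

namespace IsCoverDesign

theorem coverNumber_le_card {B : Finset (Finset (Fin v))} (hB : IsCoverDesign v k t B) :
    coverNumber v k t ≤ #B :=
  Nat.sInf_le ⟨B, hB, rfl⟩

variable {B : Finset (Finset (Fin (v + 1)))}

theorem derivedFamily (hB : IsCoverDesign (v + 1) (k + 1) (t + 1) B) (x : Fin (v + 1)) :
    IsCoverDesign v k t (derivedFamily x B) := by
  refine ⟨fun c hc => ?_, fun s hs => ?_⟩
  · obtain ⟨b, hb, rfl⟩ := mem_image.1 hc
    obtain ⟨hbB, hxb⟩ := mem_filter.1 hb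
    rw [card_deletePoint hxb, hB.1 b hbB, Nat.add_sub_cancel]
  · have hx : x ∉ s.map x.succAboveEmb := by simp [Fin.succAbove_ne]
    obtain ⟨b, hbB, hsb⟩ := hB.2 (insert x (s.map x.succAboveEmb)) (by
      rw [card_insert_of_notMem hx, card_map, hs])
    obtain ⟨hxb, hsb⟩ := insert_subset_iff.1 hsb
    exact ⟨deletePoint x b, mem_image_of_mem _ (mem_filter.2 ⟨hbB, hxb⟩),
      subset_deletePoint_iff.2 hsb⟩

theorem coverNumber_le_card_filter_mem (hB : IsCoverDesign (v + 1) (k + 1) (t + 1) B)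
    (x : Fin (v + 1)) : coverNumber v k t ≤ #{b ∈ B | x ∈ b} :=
  (hB.derivedFamily x).coverNumber_le_card.trans card_image_le

theorem mul_coverNumber_le_card_mul (hB : IsCoverDesign (v + 1) (k + 1) (t + 1) B) :
    (v + 1) * coverNumber v k t ≤ #B * (k + 1) :=
  calc (v + 1) * coverNumber v k t
      = Fintype.card (Fin (v + 1)) * coverNumber v k t := by rw [Fintype.card_fin]
    _ ≤ ∑ b ∈ B, #b := le_sum_card hB.coverNumber_le_card_filter_mem
    _ = #B * (k + 1) := sum_const_nat hB.1

end IsCoverDesign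

end

/-- The Schönheim inequality: `C(v,k,t) ≥ ⌈(v/k) · C(v−1,k−1,t−1)⌉`. -/
theorem schonheim_inequality (v k t : ℕ) (ht : 1 ≤ t) (htk : t ≤ k) (hkv : k ≤ v) :
    coverNumber v k t ≥
      ⌈((v : ℚ) / (k : ℚ)) * (coverNumber (v - 1) (k - 1) (t - 1) : ℚ)⌉₊ := by
  obtain ⟨t, rfl⟩ := Nat.exists_eq_add_of_le' ht
  obtain ⟨k, rfl⟩ := Nat.exists_eq_add_of_le' (ht.trans htk)
  obtain ⟨v, rfl⟩ := Nat.exists_eq_add_of_le' ((ht.trans htk).trans hkv)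
  obtain ⟨B, hB, hcard⟩ := exists_isCoverDesign_card_eq_coverNumber htk hkv
  simp only [Nat.add_sub_cancel]
  rw [ge_iff_le, Nat.ceil_le, div_mul_eq_mul_div, div_le_iff₀ (by positivity), ← hcard]
  exact_mod_cast hB.mul_coverNumber_le_card_mul
end

section
/- The 19 cyclic shifts modulo 19 of the block {1,2,3,4,6,8,13,14,17} form a (19,9,3) covering design; hence C(19,9,3) ≤ 19. -/
/-!
Adding 3 to `{1, 2, 3, 4, 6, 8, 13, 14, 17}` gives the nonzero squares modulo 19, so the claim is
that any three distinct residues can be shifted simultaneously into the nonzero squares. Since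
`-1` is not a square modulo 19, any two distinct residues can be ordered so that their difference
is a nonzero square. Nonzero squares are closed under multiplication, so an affine change of
variable turns these two residues into `0` and `1`. It remains to check that, as `i` runs over the
residues such that `i` and `1 + i` are both nonzero squares, the shifts by `-i` of the nonzero
squares exhaust `ℤ/19ℤ`.
-/

section CoverNumber

open Finset

variable {v k t : ℕ} {α G : Type*}

theorem coverNumber_le_card {B : Finset (Finset (Fin v))} (hB : IsCoverDesign v k t B) :
    coverNumber v k t ≤ #B :=
  Nat.sInf_le ⟨B, hB, rfl⟩

theorem isCoverDesign_map_finsetCongr (e : α ≃ Fin v) {B : Finset (Finset α)}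
    (hcard : ∀ b ∈ B, #b = k) (hcover : ∀ s : Finset α, #s = t → ∃ b ∈ B, s ⊆ b) :
    IsCoverDesign v k t (B.map e.finsetCongr.toEmbedding) := by
  refine ⟨forall_mem_map.2 fun b hb => (card_map _).trans (hcard b hb), fun s hs => ?_⟩
  obtain ⟨b, hb, hsb⟩ := hcover (e.symm.finsetCongr s) ((card_map _).trans hs)
  refine ⟨e.finsetCongr b, mem_map_of_mem _ hb, ?_⟩
  calc s = e.finsetCongr (e.symm.finsetCongr s) := (e.finsetCongr.apply_symm_apply s).symm
    _ ⊆ e.finsetCongr b := map_subset_map.2 hsb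

theorem coverNumber_card_le_card_of_translates [AddGroup G] [Fintype G] [DecidableEq G]
    {b : Finset G} (hcover : ∀ s : Finset G, #s = t → ∃ g, s ⊆ b.image (· + g)) :
    coverNumber (Fintype.card G) #b t ≤ Fintype.card G := by
  let translates : Finset (Finset G) := univ.image fun g => b.image (· + g)
  have hcard : ∀ b' ∈ translates, #b' = #b :=
    forall_mem_image.2 fun g _ => card_image_of_injective b (add_left_injective g)
  have hcover' (s : Finset G) (hs : #s = t) : ∃ b' ∈ translates, s ⊆ b' :=
    exists_mem_image.2 <| (hcover s hs).imp fun g hg => ⟨mem_univ g, hg⟩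
  calc coverNumber (Fintype.card G) #b t
      ≤ #(translates.map (Fintype.equivFin G).finsetCongr.toEmbedding) :=
        coverNumber_le_card (isCoverDesign_map_finsetCongr _ hcard hcover')
    _ = #translates := card_map _
    _ ≤ Fintype.card G := card_image_le

end CoverNumber

section QuadraticChar

open Finset

variable {F : Type*} [Field F] [Fintype F] [DecidableEq F]

theorem quadraticChar_sub_eq_one_or_of_ne (hneg : quadraticChar F (-1) = -1) {x y : F}
    (hxy : x ≠ y) : quadraticChar F (y - x) = 1 ∨ quadraticChar F (x - y) = 1 := by
  have hswap : quadraticChar F (x - y) = -quadraticChar F (y - x) := by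
    rw [← neg_sub, neg_eq_neg_one_mul, map_mul, hneg, neg_one_mul]
  refine (quadraticChar_dichotomy (sub_ne_zero.2 hxy.symm)).imp_right fun h => ?_
  rw [hswap, h, neg_neg]

theorem exists_mem_quadraticChar_sub_eq_one (hneg : quadraticChar F (-1) = -1) {s : Finset F}
    (hs : 1 < #s) : ∃ x ∈ s, ∃ y ∈ s, quadraticChar F (y - x) = 1 := by
  obtain ⟨x, hx, y, hy, hxy⟩ := one_lt_card.1 hs
  rcases quadraticChar_sub_eq_one_or_of_ne hneg hxy with h | h
  exacts [⟨x, hx, y, hy, h⟩, ⟨y, hy, x, hx, h⟩]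

theorem exists_forall_mem_quadraticChar_add_eq_one {n : ℕ} (hneg : quadraticChar F (-1) = -1)
    (hzero_one : ∀ T : Finset F, #T = n → ∃ i, quadraticChar F i = 1 ∧
      quadraticChar F (1 + i) = 1 ∧ ∀ c ∈ T, quadraticChar F (c + i) = 1)
    {s : Finset F} (hs : #s = n + 2) : ∃ i, ∀ w ∈ s, quadraticChar F (w + i) = 1 := by
  obtain ⟨x, hx, y, hy, hd⟩ := exists_mem_quadraticChar_sub_eq_one hneg (s := s) (by omega)
  have hyx : y ≠ x := by
    rintro rfl
    simp at hd
  have hd0 : y - x ≠ 0 := sub_ne_zero.2 hyx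
  let rescale (w : F) : F := (w - x) / (y - x)
  have hinj : rescale.Injective := fun _ _ h =>
    sub_left_injective ((div_left_inj' hd0).1 h)
  have hcard : #(((s.erase x).erase y).image rescale) = n := by
    rw [card_image_of_injective _ hinj, card_erase_of_mem (mem_erase.2 ⟨hyx, hy⟩),
      card_erase_of_mem hx, hs]
    omega
  obtain ⟨i, hi0, hi1, hiT⟩ := hzero_one _ hcard
  have hrescale {w : F} (hw : w ∈ s) : quadraticChar F (rescale w + i) = 1 := by
    rcases eq_or_ne w x with rfl | hwx
    · simpa [rescale] using hi0
    rcases eq_or_ne w y with rfl | hwy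
    · simpa [rescale, hd0] using hi1
    · exact hiT _ (mem_image_of_mem _ (mem_erase.2 ⟨hwy, mem_erase.2 ⟨hwx, hw⟩⟩))
  refine ⟨(y - x) * i - x, fun w hw => ?_⟩
  have haffine : w + ((y - x) * i - x) = (y - x) * (rescale w + i) := by
    simp only [rescale]
    field_simp
    ring
  rw [haffine, map_mul, hd, hrescale hw, one_mul]

end QuadraticChar

section ZModNineteen

open Finset

theorem fact_prime_nineteen : Fact (Nat.Prime 19) := ⟨by norm_num⟩

attribute [local instance] fact_prime_nineteen

theorem mem_block_iff_quadraticChar_add_three_eq_one (a : ZMod 19) :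
    a ∈ ({1, 2, 3, 4, 6, 8, 13, 14, 17} : Finset (ZMod 19)) ↔
      quadraticChar (ZMod 19) (a + 3) = 1 := by
  decide +revert

theorem exists_quadraticChar_zero_one_add_eq_one (c : ZMod 19) :
    ∃ i, quadraticChar (ZMod 19) i = 1 ∧ quadraticChar (ZMod 19) (1 + i) = 1 ∧
      quadraticChar (ZMod 19) (c + i) = 1 := by
  have hconsecutive : ∀ i ∈ ({4, 5, 6, 16} : Finset (ZMod 19)),
      quadraticChar (ZMod 19) i = 1 ∧ quadraticChar (ZMod 19) (1 + i) = 1 := by decide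
  have hshift : ∃ i ∈ ({4, 5, 6, 16} : Finset (ZMod 19)),
      quadraticChar (ZMod 19) (c + i) = 1 := by decide +revert
  obtain ⟨i, hi, hci⟩ := hshift
  exact ⟨i, (hconsecutive i hi).1, (hconsecutive i hi).2, hci⟩

theorem exists_forall_mem_quadraticChar_add_eq_one_of_card_eq_three {s : Finset (ZMod 19)}
    (hs : #s = 3) : ∃ i, ∀ w ∈ s, quadraticChar (ZMod 19) (w + i) = 1 := by
  have hneg : quadraticChar (ZMod 19) (-1) = -1 := by decide
  refine exists_forall_mem_quadraticChar_add_eq_one (n := 1) hneg (fun T hT => ?_) hs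
  obtain ⟨c, rfl⟩ := card_eq_one.1 hT
  simpa only [mem_singleton, forall_eq] using exists_quadraticChar_zero_one_add_eq_one c

end ZModNineteen

/-- The 19 cyclic shifts modulo 19 of the block `{1,2,3,4,6,8,13,14,17}` cover every
3-subset of `Z/19Z`, i.e. they form a `(19,9,3)` covering design; hence
`C(19,9,3) ≤ 19`. -/
theorem cyclic_cover_19_9_3 :
    (∀ s : Finset (ZMod 19), s.card = 3 →
       ∃ i : ZMod 19,
         s ⊆ ({1, 2, 3, 4, 6, 8, 13, 14, 17} : Finset (ZMod 19)).image (· + i)) ∧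
    coverNumber 19 9 3 ≤ 19 := by
  have hcover (s : Finset (ZMod 19)) (hs : s.card = 3) : ∃ i : ZMod 19,
      s ⊆ ({1, 2, 3, 4, 6, 8, 13, 14, 17} : Finset (ZMod 19)).image (· + i) := by
    obtain ⟨i, hi⟩ := exists_forall_mem_quadraticChar_add_eq_one_of_card_eq_three hs
    refine ⟨3 - i, fun w hw => Finset.mem_image.2 ⟨w + i - 3, ?_, by ring⟩⟩
    rw [mem_block_iff_quadraticChar_add_three_eq_one, sub_add_cancel]
    exact hi w hw
  refine ⟨hcover, ?_⟩
  have hcard : ({1, 2, 3, 4, 6, 8, 13, 14, 17} : Finset (ZMod 19)).card = 9 := by decide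
  simpa only [ZMod.card, hcard] using coverNumber_card_le_card_of_translates hcover
end

section
/- The 24 cyclic shifts modulo 24 of the block {1,2,3,5,6,8,12,13,15,21} form a (24,10,3) covering design; hence C(24,10,3) ≤ 24. -/
/-!
Covering by all translates of a block `B` in a group is translation invariant: a `t`-set
`{a, a + x₁, …}` lies in a translate of `B` as soon as the differences `x₁, …` are all realised in
`B` from one common base point `j ∈ B`. For triples in `ZMod 24` this leaves a finite check over
the `24²` pairs of differences.
-/

theorem IsCoverDesign.coverNumber_le {v k t : ℕ} {B : Finset (Finset (Fin v))}
    (hB : IsCoverDesign v k t B) : coverNumber v k t ≤ B.card :=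
  Nat.sInf_le ⟨B, hB, rfl⟩

theorem coverNumber_card_le_of_forall_exists_subset {α ι : Type*} [Fintype α] [Fintype ι]
    {k t : ℕ} (b : ι → Finset α) (card_b : ∀ i, (b i).card = k)
    (cover : ∀ s : Finset α, s.card = t → ∃ i, s ⊆ b i) :
    coverNumber (Fintype.card α) k t ≤ Fintype.card ι := by
  let e := Fintype.equivFin α
  have design : IsCoverDesign (Fintype.card α) k t
      (Finset.univ.image fun i ↦ (b i).map e.toEmbedding) := by
    refine ⟨fun c hc ↦ ?_, fun s hs ↦ ?_⟩
    · obtain ⟨i, -, rfl⟩ := Finset.mem_image.mp hc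
      rw [Finset.card_map, card_b]
    · obtain ⟨i, hi⟩ := cover (s.map e.symm.toEmbedding) (by rw [Finset.card_map, hs])
      refine ⟨_, Finset.mem_image_of_mem _ (Finset.mem_univ i), fun x hx ↦ ?_⟩
      exact Finset.mem_map_equiv.mpr (hi (Finset.mem_map_of_mem _ hx))
  exact design.coverNumber_le.trans Finset.card_image_le

section Translates

variable {G : Type*} [AddGroup G] [DecidableEq G] {B : Finset G}

theorem exists_subset_image_add_right_of_differences {n : ℕ}
    (differences : ∀ x : Fin n → G, ∃ j ∈ B, ∀ m, x m + j ∈ B)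
    {s : Finset G} (hs : s.card = n + 1) : ∃ i, s ⊆ B.image (· + i) := by
  let e := (s.equivFinOfCardEq hs).symm
  let a : G := e 0
  obtain ⟨j, hj, hxj⟩ := differences fun m ↦ e m.succ - a
  have shift_mem (m : Fin (n + 1)) : (e m : G) - a + j ∈ B := by
    cases m using Fin.cases with
    | zero => simpa [a] using hj
    | succ m => exact hxj m
  refine ⟨-j + a, fun z hz ↦ Finset.mem_image.mpr ⟨z - a + j, ?_, ?_⟩⟩
  · simpa using shift_mem (e.symm ⟨z, hz⟩)
  · simp [add_assoc]

theorem coverNumber_card_le_of_forall_exists_subset_image_add_right [Fintype G] {t : ℕ}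
    (cover : ∀ s : Finset G, s.card = t → ∃ i, s ⊆ B.image (· + i)) :
    coverNumber (Fintype.card G) B.card t ≤ Fintype.card G :=
  coverNumber_card_le_of_forall_exists_subset (fun i ↦ B.image (· + i))
    (fun i ↦ Finset.card_image_of_injective B (add_left_injective i)) cover

end Translates

/-- The starting block of the cyclic `(24,10,3)` covering, as a set of residues modulo 24. -/
def startingBlock : Finset (ZMod 24) :=
  {1, 2, 3, 5, 6, 8, 12, 13, 15, 21}

theorem card_startingBlock : startingBlock.card = 10 := by
  decide

theorem startingBlock_differences : ∀ x y : ZMod 24,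
    ∃ j ∈ startingBlock, x + j ∈ startingBlock ∧ y + j ∈ startingBlock := by
  decide +kernel

theorem exists_subset_image_startingBlock {s : Finset (ZMod 24)} (hs : s.card = 3) :
    ∃ i, s ⊆ startingBlock.image (· + i) :=
  exists_subset_image_add_right_of_differences
    (fun x ↦ by simpa only [Fin.forall_fin_two] using startingBlock_differences (x 0) (x 1)) hs

/-- The 24 cyclic shifts modulo 24 of the block `{1,2,3,5,6,8,12,13,15,21}` cover every
3-subset of `Z/24Z`, i.e. they form a `(24,10,3)` covering design; hence
`C(24,10,3) ≤ 24`. -/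
theorem cyclic_cover_24_10_3 :
    (∀ s : Finset (ZMod 24), s.card = 3 →
       ∃ i : ZMod 24,
         s ⊆ ({1, 2, 3, 5, 6, 8, 12, 13, 15, 21} : Finset (ZMod 24)).image (· + i)) ∧
    coverNumber 24 10 3 ≤ 24 := by
  refine ⟨fun s hs ↦ exists_subset_image_startingBlock hs, ?_⟩
  simpa only [ZMod.card, card_startingBlock] using
    coverNumber_card_le_of_forall_exists_subset_image_add_right
      fun s ↦ exists_subset_image_startingBlock (s := s)
end
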